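/- Let $X$ be a complex Banach space, $a<b$ real numbers and $\tau$ a finite positive Borel measure on $[a,b]$. Let $V_{[a,b]}(X)$ be the set of closed densely defined linear operators $A$ in $X$ whose resolvent set contains $[a,b]$; write $R(t,A)=(tI-A)^{-1}$ and $m_A=\max_{t\in[a,b]}\|R(t,A)\|$. Let $(\mathcal I,\|\cdot\|_{\mathcal I})$ be an operator ideal in $X$, i.e. a two-sided ideal of the algebra $LB(X)$ of bounded linear operators on $X$ that is complete in a norm with $\|PSQ\|_{\mathcal I}\le\|P\|\,\|S\|_{\mathcal I}\,\|Q\|$ and $\|S\|\le\|S\|_{\mathcal I}$ for all $P,Q\in LB(X)$, $S\in\mathcal I$ (the case $\mathcal I=LB(X)$ with the operator norm is included). For $A\in V_{[a,b]}(X)$ and $B\in\mathcal I$ put $$f^\nabla_A(B)=\int_a^b R(t,A)\,B\,R(t,A)\,t\,d\tau(t).$$ (This is the Fréchet derivative at $A$ of the operator function given by $f(z)=\int_a^b\frac{z}{t-z}\,d\tau(t)$.) Call $A,A'\in V_{[a,b]}(X)$ $\mathcal I$-equivalent if $A'=A+S$ with $S\in\mathcal I$ (so $A$ and $A'$ have the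 same domain), with the distance $\|A'-A\|_{\mathcal I}=\|S\|_{\mathcal I}$ on each equivalence class. Then: 1. The integral exists as a Bochner integral in the norm of $\mathcal I$, and $f^\nabla_A$ is a bounded linear operator on $\mathcal I$ for every $A\in V_{[a,b]}(X)$. 2. If $A,A'\in V_{[a,b]}(X)$ are $\mathcal I$-equivalent, $\varepsilon>0$ and $\|A'-A\|_{\mathcal I}<\min\{1/(2m_A),\varepsilon\}$, then for every $B\in\mathcal I$ $$\|f^\nabla_{A'}(B)-f^\nabla_A(B)\|_{\mathcal I}\le 8\,m_A^3\left(\int_a^b|t|\,d\tau(t)\right)\varepsilon\,\|B\|_{\mathcal I}.$$ 3. The map $A\mapsto f^\nabla_A$ is continuous, in the operator norm of $LB(\mathcal I)$, on each $\mathcal I$-equivalence class of operators in $V_{[a,b]}(X)$. -/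

import Mathlib

open MeasureTheory Set

/-- `R` is the resolvent `(z·I - A)⁻¹` of the (possibly unbounded) operator `A` at the point `z`:
a bounded everywhere defined operator that is a two-sided inverse of `z·I - A : D(A) → X`. -/
def IsResolventAt {X : Type*} [NormedAddCommGroup X] [NormedSpace ℂ X]
    (A : X →ₗ.[ℂ] X) (z : ℂ) (R : X →L[ℂ] X) : Prop :=
  (∀ x : X, ∃ h : R x ∈ A.domain, z • R x - A ⟨R x, h⟩ = x) ∧
    ∀ x : A.domain, R (z • (x : X) - A x) = x

open Classical in
/-- The resolvent `R(z,A)`; it is `0` (a junk value) if `z` is not in the resolvent set of `A`. -/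
noncomputable def pResolvent {X : Type*} [NormedAddCommGroup X] [NormedSpace ℂ X]
    (z : ℂ) (A : X →ₗ.[ℂ] X) : X →L[ℂ] X :=
  if h : ∃ R : X →L[ℂ] X, IsResolventAt A z R then h.choose else 0

/-- The class `V_{[a,b]}(X)`: closed densely defined operators in `X` whose resolvent set
contains `[a,b]`. -/
def MemVab {X : Type*} [NormedAddCommGroup X] [NormedSpace ℂ X]
    (a b : ℝ) (A : X →ₗ.[ℂ] X) : Prop :=
  A.IsClosed ∧ Dense (A.domain : Set X) ∧
    ∀ t ∈ Icc a b, ∃ R : X →L[ℂ] X, IsResolventAt A (t : ℂ) R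

/-- `m_A = max_{t ∈ [a,b]} ‖R(t,A)‖`. -/
noncomputable def mConst {X : Type*} [NormedAddCommGroup X] [NormedSpace ℂ X]
    (a b : ℝ) (A : X →ₗ.[ℂ] X) : ℝ :=
  sSup ((fun t : ℝ => ‖pResolvent (t : ℂ) A‖) '' Icc a b)

/-- The operator `A + T` with domain `D(A)`, for a bounded operator `T`. -/
def perturb {X : Type*} [NormedAddCommGroup X] [NormedSpace ℂ X]
    (A : X →ₗ.[ℂ] X) (T : X →L[ℂ] X) : X →ₗ.[ℂ] X :=
  (T : X →ₗ[ℂ] X) +ᵥ A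

/-- An operator ideal in `X`: a two-sided ideal of the algebra of bounded operators on `X`,
with a norm of its own. The elements of the ideal with this norm are the normed space `J`
(its completeness is a separate instance `CompleteSpace J`), and `toOp` is the inclusion of the
ideal in the algebra of bounded operators. -/
structure OperatorIdeal (X : Type*) [NormedAddCommGroup X] [NormedSpace ℂ X]
    (J : Type*) [NormedAddCommGroup J] [NormedSpace ℂ J] where
  toOp : J →ₗ[ℂ] (X →L[ℂ] X)
  toOp_injective : Function.Injective toOp
  exists_mul_mul : ∀ (P : X →L[ℂ] X) (S : J) (Q : X →L[ℂ] X), ∃ T : J, toOp T = P * toOp S * Q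
  norm_mul_mul_le : ∀ (P : X →L[ℂ] X) (S : J) (Q : X →L[ℂ] X) (T : J),
    toOp T = P * toOp S * Q → ‖T‖ ≤ ‖P‖ * ‖S‖ * ‖Q‖
  norm_toOp_le : ∀ S : J, ‖toOp S‖ ≤ ‖S‖

/-- The product `P·S·Q`, for an element `S` of the ideal and bounded operators `P`, `Q`, as an
element of the ideal. -/
noncomputable def OperatorIdeal.mulMul {X : Type*} [NormedAddCommGroup X] [NormedSpace ℂ X]
    {J : Type*} [NormedAddCommGroup J] [NormedSpace ℂ J] (I : OperatorIdeal X J)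
    (P : X →L[ℂ] X) (S : J) (Q : X →L[ℂ] X) : J :=
  (I.exists_mul_mul P S Q).choose

/-- The integrand `R(t,A)·B·R(t,A)·t`, with values in the ideal. -/
noncomputable def fDerIntegrand {X : Type*} [NormedAddCommGroup X] [NormedSpace ℂ X]
    {J : Type*} [NormedAddCommGroup J] [NormedSpace ℂ J] (I : OperatorIdeal X J)
    (A : X →ₗ.[ℂ] X) (B : J) (t : ℝ) : J :=
  t • I.mulMul (pResolvent (t : ℂ) A) B (pResolvent (t : ℂ) A)

/-- The transformer `f^∇_A(B) = ∫_a^b R(t,A)·B·R(t,A)·t dτ(t)`, a Bochner integral in the norm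
of the ideal. -/
noncomputable def fDer {X : Type*} [NormedAddCommGroup X] [NormedSpace ℂ X]
    {J : Type*} [NormedAddCommGroup J] [NormedSpace ℂ J] (I : OperatorIdeal X J)
    (τ : Measure ℝ) (a b : ℝ) (A : X →ₗ.[ℂ] X) (B : J) : J :=
  ∫ t in Icc a b, fDerIntegrand I A B t ∂τ

open Filter Topology

/-! ### Resolvents of perturbed operators -/

section Resolvent

variable {X : Type*} [NormedAddCommGroup X] [NormedSpace ℂ X]

theorem IsResolventAt.sub_eq {A : X →ₗ.[ℂ] X} {T R R' : X →L[ℂ] X} {z w : ℂ}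
    (hR : IsResolventAt A z R) (hR' : IsResolventAt (perturb A T) w R') :
    R' - R = R' * ((z - w) • 1 + T) * R := by
  ext x
  obtain ⟨hmem, hx⟩ := hR.1 x
  have h : R' (w • R x - (T (R x) + A ⟨R x, hmem⟩)) = R x := hR'.2 ⟨R x, hmem⟩
  have hA : A ⟨R x, hmem⟩ = z • R x - x := by
    rw [eq_sub_iff_add_eq', ← sub_eq_iff_eq_add.1 hx]
  rw [hA] at h
  change R' x - R x = R' ((z - w) • R x + T (R x))
  refine (congrArg (R' x - ·) h.symm).trans ?_
  rw [← map_sub]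
  congr 1
  module

theorem perturb_zero (A : X →ₗ.[ℂ] X) : perturb A 0 = A :=
  zero_vadd (X →ₗ[ℂ] X) A

theorem perturb_perturb (A : X →ₗ.[ℂ] X) (S T : X →L[ℂ] X) :
    perturb (perturb A S) T = perturb A (T + S) :=
  (add_vadd (T : X →ₗ[ℂ] X) (S : X →ₗ[ℂ] X) A).symm

theorem isResolventAt_pResolvent {A : X →ₗ.[ℂ] X} {z : ℂ}
    (h : ∃ R : X →L[ℂ] X, IsResolventAt A z R) : IsResolventAt A z (pResolvent z A) := by
  rw [pResolvent, dif_pos h]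
  exact h.choose_spec

theorem norm_le_two_mul_of_sub_eq {R R' D : X →L[ℂ] X} (h : R' - R = R' * D * R)
    (hD : ‖D‖ * ‖R‖ ≤ 1 / 2) : ‖R'‖ ≤ 2 * ‖R‖ := by
  have h₁ : ‖R'‖ ≤ ‖R‖ + ‖R' * D * R‖ := by
    rw [← h]
    exact norm_le_insert' R' R
  have h₂ : ‖R' * D * R‖ ≤ ‖R'‖ * (‖D‖ * ‖R‖) := by
    rw [mul_assoc]
    exact (norm_mul_le _ _).trans (by gcongr; exact norm_mul_le _ _)
  have h₃ := mul_le_mul_of_nonneg_left hD (norm_nonneg R')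
  linarith

theorem norm_sub_le_of_sub_eq {R R' D : X →L[ℂ] X} (h : R' - R = R' * D * R)
    (hD : ‖D‖ * ‖R‖ ≤ 1 / 2) : ‖R' - R‖ ≤ 2 * ‖R‖ ^ 2 * ‖D‖ := by
  calc ‖R' - R‖ ≤ ‖R'‖ * ‖D‖ * ‖R‖ := by
        rw [h]
        exact (norm_mul_le _ _).trans (by gcongr; exact norm_mul_le _ _)
    _ ≤ 2 * ‖R‖ * ‖D‖ * ‖R‖ := by
        gcongr
        exact norm_le_two_mul_of_sub_eq h hD
    _ = 2 * ‖R‖ ^ 2 * ‖D‖ := by ring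

theorem MemVab.continuousOn_pResolvent {a b : ℝ} {A : X →ₗ.[ℂ] X} (hA : MemVab a b A) :
    ContinuousOn (fun t : ℝ => pResolvent (t : ℂ) A) (Icc a b) := by
  intro s hs
  set R := pResolvent (s : ℂ) A
  set D : ℝ → (X →L[ℂ] X) := fun t => ((s : ℂ) - t) • 1 with hDdef
  have hD : Tendsto (fun t => ‖D t‖) (𝓝[Icc a b] s) (𝓝 0) := by
    have : Continuous fun t => ‖D t‖ := by fun_prop
    have h := (this.tendsto s).mono_left (nhdsWithin_le_nhds (s := Icc a b))
    simpa [hDdef] using h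
  have hDR : ∀ᶠ t in 𝓝[Icc a b] s, ‖D t‖ * ‖R‖ ≤ 1 / 2 := by
    have h := hD.mul_const ‖R‖
    rw [zero_mul] at h
    exact h.eventually (Iic_mem_nhds (by norm_num))
  rw [ContinuousWithinAt, tendsto_iff_norm_sub_tendsto_zero]
  refine squeeze_zero' (Eventually.of_forall fun t => norm_nonneg _) ?_
    (show Tendsto (fun t => 2 * ‖R‖ ^ 2 * ‖D t‖) (𝓝[Icc a b] s) (𝓝 0) by
      simpa using hD.const_mul (2 * ‖R‖ ^ 2))
  filter_upwards [hDR, self_mem_nhdsWithin] with t ht htmem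
  refine norm_sub_le_of_sub_eq ?_ ht
  have h := (isResolventAt_pResolvent (hA.2.2 s hs)).sub_eq (T := 0)
    (by rw [perturb_zero]; exact isResolventAt_pResolvent (hA.2.2 t htmem))
  simpa [hDdef] using h

theorem MemVab.norm_pResolvent_le {a b : ℝ} {A : X →ₗ.[ℂ] X} (hA : MemVab a b A)
    {t : ℝ} (ht : t ∈ Icc a b) : ‖pResolvent (t : ℂ) A‖ ≤ mConst a b A :=
  le_csSup (isCompact_Icc.bddAbove_image hA.continuousOn_pResolvent.norm)
    (mem_image_of_mem _ ht)

end Resolvent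

/-! ### The transformer as an integral of operators on the ideal -/

section Ideal

variable {X : Type*} [NormedAddCommGroup X] [NormedSpace ℂ X]
  {J : Type*} [NormedAddCommGroup J] [NormedSpace ℂ J] (I : OperatorIdeal X J)

namespace OperatorIdeal

theorem toOp_mulMul (P : X →L[ℂ] X) (S : J) (Q : X →L[ℂ] X) :
    I.toOp (I.mulMul P S Q) = P * I.toOp S * Q :=
  (I.exists_mul_mul P S Q).choose_spec

theorem norm_mulMul_le (P : X →L[ℂ] X) (S : J) (Q : X →L[ℂ] X) :
    ‖I.mulMul P S Q‖ ≤ ‖P‖ * ‖S‖ * ‖Q‖ :=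
  I.norm_mul_mul_le P S Q _ (I.toOp_mulMul P S Q)

/-- The bounded operator `S ↦ P·S·Q` on the ideal. -/
noncomputable def sandwich (P Q : X →L[ℂ] X) : J →L[ℂ] J :=
  LinearMap.mkContinuous
    { toFun := fun S => I.mulMul P S Q
      map_add' := fun S T => I.toOp_injective (by
        simp only [map_add, toOp_mulMul, mul_add, add_mul])
      map_smul' := fun c S => I.toOp_injective (by
        simp only [map_smul, toOp_mulMul, mul_smul_comm, smul_mul_assoc, RingHom.id_apply]) }
    (‖P‖ * ‖Q‖) fun S => (I.norm_mulMul_le P S Q).trans_eq (by ring)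

theorem sandwich_apply (P Q : X →L[ℂ] X) (S : J) : I.sandwich P Q S = I.mulMul P S Q := rfl

theorem norm_sandwich_le (P Q : X →L[ℂ] X) : ‖I.sandwich P Q‖ ≤ ‖P‖ * ‖Q‖ :=
  LinearMap.mkContinuous_norm_le _ (by positivity) _

/-- `sandwich` as a bounded bilinear map. -/
noncomputable def sandwichBilin : (X →L[ℂ] X) →L[ℂ] (X →L[ℂ] X) →L[ℂ] (J →L[ℂ] J) :=
  LinearMap.mkContinuous₂
    (LinearMap.mk₂ ℂ I.sandwich
      (fun P P' Q => by
        ext S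
        apply I.toOp_injective
        simp only [add_apply, sandwich_apply, map_add, toOp_mulMul, add_mul])
      (fun c P Q => by
        ext S
        apply I.toOp_injective
        simp only [smul_apply, sandwich_apply, map_smul, toOp_mulMul,
          smul_mul_assoc])
      (fun P Q Q' => by
        ext S
        apply I.toOp_injective
        simp only [add_apply, sandwich_apply, map_add, toOp_mulMul, mul_add])
      (fun c P Q => by
        ext S
        apply I.toOp_injective
        simp only [smul_apply, sandwich_apply, map_smul, toOp_mulMul,
          mul_smul_comm]))
    1 fun P Q => (I.norm_sandwich_le P Q).trans_eq (by ring)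

theorem sandwichBilin_apply (P Q : X →L[ℂ] X) : I.sandwichBilin P Q = I.sandwich P Q := rfl

theorem norm_sandwich_self_sub_le (P Q : X →L[ℂ] X) :
    ‖I.sandwich Q Q - I.sandwich P P‖ ≤ ‖Q - P‖ * (‖Q‖ + ‖P‖) := by
  have h : I.sandwich Q Q - I.sandwich P P = I.sandwich (Q - P) Q + I.sandwich P (Q - P) := by
    simp only [← sandwichBilin_apply, map_sub, sub_apply]
    abel
  rw [h]
  calc _ ≤ ‖Q - P‖ * ‖Q‖ + ‖P‖ * ‖Q - P‖ :=
        (norm_add_le _ _).trans (add_le_add (I.norm_sandwich_le _ _) (I.norm_sandwich_le _ _))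
    _ = _ := by ring

end OperatorIdeal

/-- The operator `B ↦ R(t,A)·B·R(t,A)·t` on the ideal. -/
noncomputable def fDerKernel (A : X →ₗ.[ℂ] X) (t : ℝ) : J →L[ℂ] J :=
  t • I.sandwich (pResolvent (t : ℂ) A) (pResolvent (t : ℂ) A)

/-- The transformer `f^∇_A` as a bounded operator on the ideal. -/
noncomputable def fDerOp (τ : Measure ℝ) (a b : ℝ) (A : X →ₗ.[ℂ] X) : J →L[ℂ] J :=
  ∫ t in Icc a b, fDerKernel I A t ∂τ

variable {a b : ℝ} {A : X →ₗ.[ℂ] X} (τ : Measure ℝ) [IsFiniteMeasure τ]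

theorem MemVab.integrableOn_fDerKernel (hA : MemVab a b A) :
    IntegrableOn (fDerKernel I A) (Icc a b) τ := by
  refine ContinuousOn.integrableOn_compact isCompact_Icc ?_
  have hR := hA.continuousOn_pResolvent
  exact continuousOn_id.smul ((I.sandwichBilin.continuous.comp_continuousOn hR).clm_apply hR)

theorem MemVab.integrableOn_fDerIntegrand (hA : MemVab a b A) (B : J) :
    IntegrableOn (fDerIntegrand I A B) (Icc a b) τ :=
  (hA.integrableOn_fDerKernel I τ).apply_continuousLinearMap B

theorem MemVab.fDerOp_apply [CompleteSpace J] (hA : MemVab a b A) (B : J) :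
    fDerOp I τ a b A B = fDer I τ a b A B :=
  ContinuousLinearMap.integral_apply (hA.integrableOn_fDerKernel I τ) B

theorem norm_fDerKernel_perturb_sub_le (hA : MemVab a b A) {S : J}
    (hA' : MemVab a b (perturb A (I.toOp S))) (hS : ‖S‖ * mConst a b A ≤ 1 / 2)
    {t : ℝ} (ht : t ∈ Icc a b) :
    ‖fDerKernel I (perturb A (I.toOp S)) t - fDerKernel I A t‖ ≤
      |t| * (8 * mConst a b A ^ 3 * ‖S‖) := by
  set R := pResolvent (t : ℂ) A
  set R' := pResolvent (t : ℂ) (perturb A (I.toOp S))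
  set m := mConst a b A
  have hRm : ‖R‖ ≤ m := hA.norm_pResolvent_le ht
  have hm : 0 ≤ m := (norm_nonneg R).trans hRm
  have hTS := I.norm_toOp_le S
  have hsub : R' - R = R' * I.toOp S * R := by
    simpa using (isResolventAt_pResolvent (hA.2.2 t ht)).sub_eq
      (isResolventAt_pResolvent (hA'.2.2 t ht))
  have hsmall : ‖I.toOp S‖ * ‖R‖ ≤ 1 / 2 := le_trans (by gcongr) hS
  have h₁ : ‖R' - R‖ ≤ 2 * m ^ 2 * ‖S‖ :=
    (norm_sub_le_of_sub_eq hsub hsmall).trans (by gcongr)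
  have h₂ : ‖R'‖ ≤ 2 * m := (norm_le_two_mul_of_sub_eq hsub hsmall).trans (by gcongr)
  rw [fDerKernel, fDerKernel, ← smul_sub, norm_smul, Real.norm_eq_abs]
  gcongr
  calc _ ≤ ‖R' - R‖ * (‖R'‖ + ‖R‖) := I.norm_sandwich_self_sub_le R R'
    _ ≤ 2 * m ^ 2 * ‖S‖ * (2 * m + m) := by gcongr
    _ = 6 * m ^ 3 * ‖S‖ := by ring
    _ ≤ 8 * m ^ 3 * ‖S‖ := by gcongr; norm_num

theorem norm_fDerOp_perturb_sub_le (hA : MemVab a b A) {S : J}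
    (hA' : MemVab a b (perturb A (I.toOp S))) (hS : ‖S‖ * mConst a b A ≤ 1 / 2) :
    ‖fDerOp I τ a b (perturb A (I.toOp S)) - fDerOp I τ a b A‖ ≤
      8 * mConst a b A ^ 3 * (∫ t in Icc a b, |t| ∂τ) * ‖S‖ := by
  rw [fDerOp, fDerOp, ← integral_sub (hA'.integrableOn_fDerKernel I τ)
    (hA.integrableOn_fDerKernel I τ)]
  have habs : IntegrableOn (fun t : ℝ => |t|) (Icc a b) τ :=
    continuous_abs.continuousOn.integrableOn_compact isCompact_Icc
  refine (norm_integral_le_of_norm_le (habs.mul_const (8 * mConst a b A ^ 3 * ‖S‖))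
    ((ae_restrict_iff' measurableSet_Icc).2 (ae_of_all _ fun t ht =>
      norm_fDerKernel_perturb_sub_le I hA hA' hS ht))).trans_eq ?_
  rw [integral_mul_const]
  ring

theorem continuousOn_fDerOp_perturb (A : X →ₗ.[ℂ] X) :
    ContinuousOn (fun S : J => fDerOp I τ a b (perturb A (I.toOp S)))
      {S : J | MemVab a b (perturb A (I.toOp S))} := by
  intro S₀ hS₀
  set U := {S : J | MemVab a b (perturb A (I.toOp S))}
  set A₀ := perturb A (I.toOp S₀)
  set C := 8 * mConst a b A₀ ^ 3 * ∫ t in Icc a b, |t| ∂τ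
  have hperturb : ∀ S : J, perturb A (I.toOp S) = perturb A₀ (I.toOp (S - S₀)) := fun S => by
    rw [perturb_perturb, ← map_add, sub_add_cancel]
  have hsub : Tendsto (fun S => ‖S - S₀‖) (𝓝[U] S₀) (𝓝 0) :=
    (tendsto_norm_sub_self S₀).mono_left nhdsWithin_le_nhds
  have hsmall : ∀ᶠ S in 𝓝[U] S₀, ‖S - S₀‖ * mConst a b A₀ ≤ 1 / 2 := by
    have h := hsub.mul_const (mConst a b A₀)
    rw [zero_mul] at h
    exact h.eventually (Iic_mem_nhds (by norm_num))
  rw [ContinuousWithinAt, tendsto_iff_norm_sub_tendsto_zero]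
  refine squeeze_zero' (Eventually.of_forall fun S => norm_nonneg _) ?_
    (show Tendsto (fun S => C * ‖S - S₀‖) (𝓝[U] S₀) (𝓝 0) by simpa using hsub.const_mul C)
  filter_upwards [hsmall, self_mem_nhdsWithin] with S hS hSU
  have hSU : MemVab a b (perturb A (I.toOp S)) := hSU
  rw [hperturb] at hSU ⊢
  exact norm_fDerOp_perturb_sub_le I τ hS₀ hSU hS

end Ideal

theorem fDer_continuous {X : Type*} [NormedAddCommGroup X] [NormedSpace ℂ X] [CompleteSpace X]
    {J : Type*} [NormedAddCommGroup J] [NormedSpace ℂ J] [CompleteSpace J]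
    (I : OperatorIdeal X J) (a b : ℝ) (hab : a < b) (τ : Measure ℝ) [IsFiniteMeasure τ] :
    -- the integral exists in the ideal norm and defines a bounded operator `F A` on the ideal
    ∃ F : (X →ₗ.[ℂ] X) → (J →L[ℂ] J),
      (∀ A : X →ₗ.[ℂ] X, MemVab a b A → ∀ B : J,
        IntegrableOn (fDerIntegrand I A B) (Icc a b) τ ∧ F A B = fDer I τ a b A B) ∧
      -- the estimate, for equivalent operators `A` and `A' = A + S`, `S` in the ideal
      (∀ A A' : X →ₗ.[ℂ] X, MemVab a b A → MemVab a b A' →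
        ∀ S : J, A' = perturb A (I.toOp S) →
        ∀ ε : ℝ, 0 < ε → ‖S‖ < min (1 / (2 * mConst a b A)) ε →
        ∀ B : J, ‖fDer I τ a b A' B - fDer I τ a b A B‖ ≤
          8 * mConst a b A ^ 3 * (∫ t in Icc a b, |t| ∂τ) * ε * ‖B‖) ∧
      -- continuity in operator norm on the equivalence class `{A + S}` of each `A`
      (∀ A : X →ₗ.[ℂ] X, MemVab a b A →
        ContinuousOn (fun S : J => F (perturb A (I.toOp S)))
          {S : J | MemVab a b (perturb A (I.toOp S))}) := by
  refine ⟨fDerOp I τ a b, fun A hA B => ⟨hA.integrableOn_fDerIntegrand I τ B,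
    hA.fDerOp_apply I τ B⟩, ?_, fun A _ => continuousOn_fDerOp_perturb I τ A⟩
  rintro A _ hA hA' S rfl ε hε hS B
  obtain ⟨hSm, hSε⟩ := lt_min_iff.1 hS
  have hm : 0 < mConst a b A := by
    have := one_div_pos.1 ((norm_nonneg S).trans_lt hSm)
    linarith
  have hsmall : ‖S‖ * mConst a b A ≤ 1 / 2 := by
    rw [lt_div_iff₀ (by positivity)] at hSm
    linarith
  rw [← hA.fDerOp_apply I τ B, ← hA'.fDerOp_apply I τ B, ← sub_apply]
  have hint : 0 ≤ ∫ t in Icc a b, |t| ∂τ := integral_nonneg fun t => abs_nonneg t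
  refine ContinuousLinearMap.le_of_opNorm_le _ ?_ B
  exact (norm_fDerOp_perturb_sub_le I τ hA hA' hsmall).trans (by gcongr)
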